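/- For any weak composition a, there exists a unique standard key tableau T_a ∈ SKT(a) with des(T_a) = a. Moreover, every non-virtual T ∈ SKT(a) satisfies des(T) ≥ a, where b ≥ a means b_1 + ⋯ + b_k ≥ a_1 + ⋯ + a_k for all k. -/

import Mathlib

open List

namespace EG

/-! ## Words, permutations, and reduced words.

A word is a list of positive natural numbers `(ρ_ℓ, …, ρ_1)`, read left to right,
representing the product of simple transpositions `s_{ρ_ℓ} ⋯ s_{ρ_1}`. -/

/-- The permutation of `ℕ` represented by a word. -/
def toPerm (ρ : List ℕ) : Equiv.Perm ℕ :=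
  (ρ.map fun i => Equiv.swap i (i + 1)).prod

/-- `ρ` is a reduced word: its letters are positive, and no shorter word represents
the same permutation. -/
def IsReducedWord (ρ : List ℕ) : Prop :=
  (∀ i ∈ ρ, 1 ≤ i) ∧
    ∀ σ : List ℕ, (∀ i ∈ σ, 1 ≤ i) → toPerm σ = toPerm ρ → ρ.length ≤ σ.length

/-- `ρ` is a reduced word for the permutation `w`. -/
def ReducedWordFor (ρ : List ℕ) (w : Equiv.Perm ℕ) : Prop :=
  IsReducedWord ρ ∧ toPerm ρ = w

/-! ## Elementary Coxeter–Knuth relations. -/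

/-- The elementary Coxeter–Knuth move on a consecutive triple
`(a, b, c) = (ρ_{i+1}, ρ_i, ρ_{i−1})`. -/
def ckTriple (a b c : ℕ) : ℕ × ℕ × ℕ :=
  if a = c then (b, a, b)
  else if (c > a ∧ a > b) ∨ (c < a ∧ a < b) then (a, c, b)
  else if (a > c ∧ c > b) ∨ (a < c ∧ c < b) then (b, a, c)
  else (a, b, c)

/-- The elementary Coxeter–Knuth relation `𝔡_i`, acting on the letters
`ρ_{i+1} ρ_i ρ_{i−1}` of a word `ρ = (ρ_ℓ, …, ρ_1)` (indexed from the right). -/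
def ckMove (i : ℕ) (ρ : List ℕ) : List ℕ :=
  if 2 ≤ i ∧ i + 1 ≤ ρ.length then
    let p := ρ.length - i - 1
    let t := ckTriple (ρ.getD p 0) (ρ.getD (p + 1) 0) (ρ.getD (p + 2) 0)
    ((ρ.set p t.1).set (p + 1) t.2.1).set (p + 2) t.2.2
  else ρ

/-- Two words are Coxeter–Knuth equivalent if one is obtained from the other by a
finite sequence of elementary Coxeter–Knuth relations. -/
def CKEquiv (ρ σ : List ℕ) : Prop :=
  ∃ ms : List ℕ, σ = ms.foldl (fun w i => ckMove i w) ρ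

/-! ## Run decompositions and descent tableaux. -/

/-- Split a list into maximal blocks, breaking between consecutive letters `a`, `b`
whenever `brk a b` holds. -/
def splitWhen (brk : ℕ → ℕ → Bool) : List ℕ → List (List ℕ)
  | [] => []
  | [a] => [[a]]
  | a :: b :: rest =>
    match splitWhen brk (b :: rest) with
    | r :: rs => if brk a b then [a] :: r :: rs else (a :: r) :: rs
    | [] => [[a]]

/-- The run decomposition of a word into maximal strictly increasing runs, listed
left to right (so the list is `[ρ⁽ᵏ⁾, …, ρ⁽¹⁾]`, with `ρ⁽¹⁾` the final run). -/
def runs (ρ : List ℕ) : List (List ℕ) := splitWhen (fun a b => decide (b ≤ a)) ρ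

/-- The rows of the descent tableau `𝔻(ρ)`, listed bottom to top:
`[ρ⁽¹⁾, …, ρ⁽ᵏ⁾]`. -/
def rowsOf (ρ : List ℕ) : List (List ℕ) := (runs ρ).reverse

/-- The row reading word of a tableau whose rows are listed bottom to top:
read rows left to right, starting with the top row. -/
def wordOf (R : List (List ℕ)) : List ℕ := R.reverse.flatten

/-- The descent composition `Des(ρ) = (|ρ⁽¹⁾|, …, |ρ⁽ᵏ⁾|)`. -/
def DesComp (ρ : List ℕ) : List ℕ := (rowsOf ρ).map List.length

/-- A list of rows (bottom to top) is an increasing Young tableau of partition shape: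
rows strictly increase left to right, shape is a partition, and columns strictly
increase bottom to top. -/
def IsIncreasingYoungRows (R : List (List ℕ)) : Prop :=
  (∀ r ∈ R, r.Chain' (· < ·)) ∧
    R.Chain' (fun lo hi => hi.length ≤ lo.length ∧
      ∀ j < hi.length, lo.getD j 0 < hi.getD j 0)

/-! ## The drop map on a pair of increasing rows. -/

/-- Increment the first `n` letters of a list by `1`. -/
def incFirst : ℕ → List ℕ → List ℕ
  | 0, l => l
  | _ + 1, [] => []
  | n + 1, a :: l => (a + 1) :: incFirst n l

/-- Decrement the first `n` letters of a list by `1`. -/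
def decFirst : ℕ → List ℕ → List ℕ
  | 0, l => l
  | _ + 1, [] => []
  | n + 1, a :: l => (a - 1) :: decFirst n l

/-- `bCount t1 i [s_i, s_{i+1}, …]` is the largest `b` with `t1 = s_j + j` for all
`i ≤ j < i + b`. -/
def bCount (t1 : ℕ) : ℕ → List ℕ → ℕ
  | _, [] => 0
  | i, s :: rest => if t1 = s + i then bCount t1 (i + 1) rest + 1 else 0

/-- Index of the first failure `τ_j ≤ σ_j` in the drop alignment of `σ` below `τ`. -/
def failIdx (τ σ : List ℕ) : Option ℕ :=
  (τ.zip σ).findIdx? (fun p => decide (p.1 ≤ p.2))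

/-- Fueled computation of the drop of the row `σ` below the row `τ`, returning the
new pair (top row, bottom row). -/
def dropPairAux : ℕ → List ℕ → List ℕ → List ℕ × List ℕ
  | 0, τ, σ => (τ, σ)
  | fuel + 1, τ, σ =>
    match failIdx τ σ with
    | none =>
      if σ.length < τ.length then (τ.take σ.length, σ ++ τ.drop σ.length)
      else (τ, σ)
    | some j =>
      let x := τ.getD j 0
      let τr := τ.drop (j + 1)
      let σr := σ.drop j
      let res := dropPairAux fuel τr σr
      let l1 := (failIdx τr σr).getD τr.length
      let b := if l1 = 0 then 0
               else if x + 1 = τr.headD 0 then bCount (τr.headD 0) 1 (σr.take l1) else 0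
      (τ.take j ++ res.1, σ.take j ++ x :: incFirst b res.2)

/-- The drop of the row `σ` below the row `τ`: the pair (new top row, new bottom row). -/
def dropPair (τ σ : List ℕ) : List ℕ × List ℕ := dropPairAux (τ.length + 1) τ σ

/-- The word `drop(τσ)`. -/
def dropW (τ σ : List ℕ) : List ℕ := (dropPair τ σ).1 ++ (dropPair τ σ).2

/-- Apply `drop` to rows `i` and `i+1` (1-indexed from the bottom) of a list of rows. -/
def dropAt : ℕ → List (List ℕ) → List (List ℕ)
  | 1, σr :: τr :: rest => (dropPair τr σr).2 :: (dropPair τr σr).1 :: rest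
  | n + 2, r :: R => r :: dropAt (n + 1) R
  | _, R => R

/-- The map `drop_i` on words: replace the runs `ρ⁽ⁱ⁺¹⁾ ρ⁽ⁱ⁾` of the run
decomposition by `drop(ρ⁽ⁱ⁺¹⁾ ρ⁽ⁱ⁾)`. -/
def dropWordAt (i : ℕ) (ρ : List ℕ) : List ℕ := wordOf (dropAt i (rowsOf ρ))

/-- One sweep of all the maps `drop_i`. -/
def sweepDrop (ρ : List ℕ) : List ℕ :=
  (List.range (runs ρ).length).foldl (fun w i => dropWordAt (i + 1) w) ρ

/-- The drop `drop(ρ)` of a word: repeatedly apply the maps `drop_i` until reaching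
the fixed point (an increasing Young tableau). -/
def dropFull (ρ : List ℕ) : List ℕ := sweepDrop^[ρ.length * ρ.length + 1] ρ

/-! ## The lift map on a pair of increasing rows. -/

/-- `bCount2 x i τblk σblk` is the largest `b` with `τ_j = σ_j = x + j` for all
`i ≤ j < i + b`. -/
def bCount2 (x : ℕ) : ℕ → List ℕ → List ℕ → ℕ
  | i, t :: ts, s :: ss =>
      if t = x + i ∧ s = x + i then bCount2 x (i + 1) ts ss + 1 else 0
  | _, _, _ => 0

/-- Index of the first failure (from the right) in the lift alignment of `τ` above
`σ`: here both rows are given reversed. -/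
def liftFailIdx (τR σR : List ℕ) : Option ℕ :=
  (τR.zip σR).findIdx? (fun p => decide (p.1 < p.2))

/-- Fueled computation of the lift of the row `τ` above the row `σ`, on reversed
rows; returns the new (top row, bottom row), reversed. -/
def liftPairAuxR : ℕ → List ℕ → List ℕ → List ℕ × List ℕ
  | 0, τR, σR => (τR, σR)
  | fuel + 1, τR, σR =>
    match liftFailIdx τR σR with
    | none => (τR, σR)
    | some j =>
      let x := σR.getD j 0
      let τr := τR.drop j
      let σr := σR.drop (j + 1)
      let res := liftPairAuxR fuel τr σr
      let τblk := (τR.take j).reverse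
      let σblk := (σR.take j).reverse
      let b := if σblk.headD 0 = x + 1 then bCount2 x 1 τblk σblk else 0
      (τR.take j ++ x :: res.1, (decFirst b σblk).reverse ++ res.2)

/-- Check that the lift alignment leaves no unmatched letters of `σ` (no letter of
`σ` other than the `x_j`'s lacks a letter of `τ` above it); when some letter is
left over, the lift acts trivially. -/
def liftOkAux : ℕ → List ℕ → List ℕ → Bool
  | 0, _, _ => true
  | fuel + 1, τR, σR =>
    match liftFailIdx τR σR with
    | none => σR.length ≤ τR.length
    | some j => liftOkAux fuel (τR.drop j) (σR.drop (j + 1))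

/-- The lift of the row `τ` above the row `σ`: the pair (new top row, new bottom row). -/
def liftPair (τ σ : List ℕ) : List ℕ × List ℕ :=
  if liftOkAux (σ.length + 1) τ.reverse σ.reverse then
    let r := liftPairAuxR (σ.length + 1) τ.reverse σ.reverse
    (r.1.reverse, r.2.reverse)
  else (τ, σ)

/-- The word `lift(τσ)`. -/
def liftW (τ σ : List ℕ) : List ℕ := (liftPair τ σ).1 ++ (liftPair τ σ).2

/-- Apply `lift` to rows `i` and `i+1` (1-indexed from the bottom) of a list of rows. -/
def liftAt : ℕ → List (List ℕ) → List (List ℕ)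
  | 1, σr :: τr :: rest => (liftPair τr σr).2 :: (liftPair τr σr).1 :: rest
  | n + 2, r :: R => r :: liftAt (n + 1) R
  | _, R => R

/-- The lifting sequence `lift_{[i,j]} = lift_j ∘ ⋯ ∘ lift_i`. -/
def liftSeq (i j : ℕ) (T : List (List ℕ)) : List (List ℕ) :=
  (List.range' i (j + 1 - i)).foldl (fun t k => liftAt k t) T

/-- Fueled check that `lift_i, lift_{i+1}, …` all act faithfully, for `n` steps. -/
def faithfulAux : ℕ → ℕ → List (List ℕ) → Bool
  | 0, _, _ => false
  | n + 1, i, T =>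
    let T' := liftAt i T
    if T' = T then false
    else if n = 0 then true
    else faithfulAux n (i + 1) T'

/-- The lifting sequence `lift_{[i,j]}` acts faithfully on `T`. -/
def faithfulSeq (i j : ℕ) (T : List (List ℕ)) : Bool :=
  if i ≤ j then faithfulAux (j + 1 - i) i T else false

/-- Find the canonical move: the maximal `j` admitting some `i ≤ j` with
`lift_{[i,j]}` faithful, together with the minimal such `i`. -/
def findMove (T : List (List ℕ)) : Option (ℕ × ℕ) :=
  (List.range (T.length + 1)).reverse.findSome? (fun j =>
    ((List.range' 1 j).find? (fun i => faithfulSeq i j T)).map (fun i => (i, j)))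

/-- Fueled canonical lifting loop. -/
def liftCanonAux : ℕ → List (List ℕ) → List (List ℕ)
  | 0, T => T
  | fuel + 1, T =>
    match findMove T with
    | none => T
    | some ij => liftCanonAux fuel (liftSeq ij.1 ij.2 T)

/-- The canonical lifting algorithm applied to a tableau (rows bottom to top). -/
def liftCanon (T : List (List ℕ)) : List (List ℕ) :=
  liftCanonAux (T.flatten.length * T.length + 1) T

/-- The word `lift(ρ)`: the row reading word of the canonical lift of `𝔻(ρ)`. -/
def liftWord (ρ : List ℕ) : List ℕ := wordOf (liftCanon (rowsOf ρ))

/-! ## Weak descent compositions. -/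

/-- From the list of minima `[r_k, …, r_1]` of the runs (topmost first), compute
`[r̂_k, …, r̂_1]` where `r̂_k = r_k` and `r̂_i = min (r_i, r̂_{i+1} − 1)`. -/
def hatMins (L : List ℤ) : List ℤ :=
  (L.foldl (fun (acc : List ℤ × Option ℤ) r =>
    let v := match acc.2 with
      | none => r
      | some p => min r (p - 1)
    (acc.1 ++ [v], some v)) ([], none)).1

/-- Build the weak composition with value `lens_i` in position `hs_i` and `0`
elsewhere. -/
def buildWeakComp (hs : List ℤ) (lens : List ℕ) : List ℕ :=
  (List.range (hs.headD 0).toNat).map (fun p =>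
    match (hs.zip lens).find? (fun q => decide (q.1 = (p : ℤ) + 1)) with
    | some q => q.2
    | none => 0)

/-- The weak descent composition determined by the minima and lengths of the runs
(topmost run first); `none` means virtual. -/
def desFromBlocks (mins : List ℤ) (lens : List ℕ) : Option (List ℕ) :=
  let hs := hatMins mins
  if hs = [] then some []
  else if hs.getLastD 0 ≤ 0 then none
  else some (buildWeakComp hs lens)

/-- The weak descent composition `des(ρ)` of a word; `none` means `ρ` is virtual. -/
def desWord (ρ : List ℕ) : Option (List ℕ) :=
  desFromBlocks ((runs ρ).map (fun r => ((r.headD 0 : ℕ) : ℤ)))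
    ((runs ρ).map List.length)

/-- Prefix-sum dominance of weak compositions: `domLe a b` means
`a_1 + ⋯ + a_k ≤ b_1 + ⋯ + b_k` for all `k` (i.e. `b ≥ a`). -/
def domLe (a b : List ℕ) : Prop := ∀ k, ((a.take k).sum ≤ (b.take k).sum)

/-- A reduced word is Yamanouchi if it is non-virtual and its weak descent
composition is dominated by that of every non-virtual Coxeter–Knuth equivalent word. -/
def IsYam (ρ : List ℕ) : Prop :=
  IsReducedWord ρ ∧ ∃ d, desWord ρ = some d ∧
    ∀ σ e, CKEquiv ρ σ → desWord σ = some e → domLe d e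

/-! ## Quasisymmetric functions, slide polynomials, and generating functions.

We model formal power series in variables `x_1, x_2, …` (indexed by `ℕ`, with
variable `i` standing for `x_{i+1}`) as functions `(ℕ →₀ ℕ) → ℤ` recording
coefficients of monomials. -/

/-- `β` refines `α`: `β` splits into consecutive blocks with sums the parts of `α`. -/
def Refines (β α : List ℕ) : Prop :=
  ∃ blocks : List (List ℕ), blocks.flatten = β ∧
    List.Forall₂ (fun blk a => blk.sum = a) blocks α

/-- The flattening of a weak composition given as a finitely supported exponent
vector: the list of its nonzero values, in order. -/
def flatOf (b : ℕ →₀ ℕ) : List ℕ :=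
  ((List.range (b.support.sup id + 1)).map b).filter (fun x => decide (x ≠ 0))

open Classical in
/-- The fundamental quasisymmetric function `F_α`. -/
noncomputable def Fqs (α : List ℕ) : (ℕ →₀ ℕ) → ℤ :=
  fun b => if Refines (flatOf b) α then 1 else 0

open Classical in
/-- The fundamental slide polynomial `𝔉_a` of a weak composition `a`. -/
noncomputable def FSlide (a : List ℕ) : (ℕ →₀ ℕ) → ℤ :=
  fun b =>
    if (∀ i, a.length ≤ i → b i = 0) ∧
       (∀ k, (a.take k).sum ≤ ∑ i ∈ Finset.range k, b i) ∧
       Refines (flatOf b) (a.filter (fun x => decide (x ≠ 0))) then 1 else 0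

/-- `𝔉` extended to virtual indices by `𝔉_∅ = 0`. -/
noncomputable def FSlideO : Option (List ℕ) → (ℕ →₀ ℕ) → ℤ
  | none => 0
  | some a => FSlide a

/-- The Stanley symmetric function `S_w`. -/
noncomputable def StanleySym (w : Equiv.Perm ℕ) : (ℕ →₀ ℕ) → ℤ :=
  ∑ᶠ ρ ∈ {ρ : List ℕ | ReducedWordFor ρ w}, Fqs (DesComp ρ)

/-- The Schubert polynomial `𝔖_w`. -/
noncomputable def Schubert (w : Equiv.Perm ℕ) : (ℕ →₀ ℕ) → ℤ :=
  ∑ᶠ ρ ∈ {ρ : List ℕ | ReducedWordFor ρ w}, FSlideO (desWord ρ)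

/-! ## Standard Young tableaux and Schur functions. -/

/-- The (bottom-to-top) row index of the row of `T` containing the entry `e`. -/
def rowOf (T : List (List ℕ)) (e : ℕ) : ℕ := T.findIdx (fun r => r.contains e)

/-- The column index of the entry `e` in `T`. -/
def colOf (T : List (List ℕ)) (e : ℕ) : ℕ :=
  (T.getD (rowOf T e) []).findIdx (fun z => z == e)

/-- `T` (rows listed bottom to top) is a standard Young tableau. -/
def IsSYT (T : List (List ℕ)) : Prop :=
  (∀ r ∈ T, r.Chain' (· < ·)) ∧
    T.Chain' (fun lo hi => hi.length ≤ lo.length ∧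
      ∀ j < hi.length, lo.getD j 0 < hi.getD j 0) ∧
    [] ∉ T ∧
    T.flatten.Perm (List.range' 1 T.flatten.length)

/-- The descent composition of a standard Young tableau: `i` is a descent when
`i+1` lies weakly left of `i`. -/
def sytDes (T : List (List ℕ)) : List ℕ :=
  (splitWhen (fun a _ => decide (colOf T (a + 1) ≤ colOf T a))
    (List.range' 1 T.flatten.length)).map List.length

/-- The Schur function `s_λ`, for a partition `λ` given as the list of row lengths
bottom to top. -/
noncomputable def Schur (lam : List ℕ) : (ℕ →₀ ℕ) → ℤ :=
  ∑ᶠ T ∈ {T : List (List ℕ) | IsSYT T ∧ T.map List.length = lam}, Fqs (sytDes T)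

/-! ## Standard key tableaux and Demazure characters. -/

/-- `T` is a standard key tableau of shape the weak composition `a`: rows (listed
bottom to top, with row `i` of length `a_i`, possibly `0`) strictly decrease left to
right, the entries are `1, …, |a|`, and whenever an entry `i` lies above an entry
`k` in the same column with `i < k`, some entry `j` right of `k` satisfies `i < j`. -/
def IsSKT (a : List ℕ) (T : List (List ℕ)) : Prop :=
  T.map List.length = a ∧
    (∀ r ∈ T, r.Chain' (· > ·)) ∧
    T.flatten.Perm (List.range' 1 a.sum) ∧
    ∀ lo hi, lo < hi → hi < T.length →
      ∀ c, c < (T.getD hi []).length → c < (T.getD lo []).length →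
        (T.getD hi []).getD c 0 < (T.getD lo []).getD c 0 →
        ∃ c', c < c' ∧ c' < (T.getD lo []).length ∧
          (T.getD hi []).getD c 0 < (T.getD lo []).getD c' 0

/-- The runs of the word `n ⋯ 2 1` determined by the descents of a standard key
tableau `T` (where `i` is a descent when `i+1` lies weakly right of `i`). -/
def sktRuns (T : List (List ℕ)) : List (List ℕ) :=
  splitWhen (fun _ b => decide (colOf T b ≤ colOf T (b + 1)))
    ((List.range' 1 T.flatten.length).reverse)

/-- The minimal row (1-indexed from the bottom) among the cells of the entries of
`r` in `T`. -/
def minRow (T : List (List ℕ)) (r : List ℕ) : ℕ :=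
  ((r.map (fun e => rowOf T e + 1)).min?).getD 0

/-- The weak descent composition `des(T)` of a standard key tableau; `none` means
`T` is virtual. -/
def desSKT (T : List (List ℕ)) : Option (List ℕ) :=
  (desFromBlocks ((sktRuns T).map (fun r => ((minRow T r : ℕ) : ℤ)))
    ((sktRuns T).map List.length)).map
      (fun d => d ++ List.replicate (T.length - d.length) 0)

/-- The Demazure character (key polynomial) `κ_a`. -/
noncomputable def KeyPoly (a : List ℕ) : (ℕ →₀ ℕ) → ℤ :=
  ∑ᶠ T ∈ {T : List (List ℕ) | IsSKT a T}, FSlideO (desSKT T)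

/-- `κ` extended to virtual indices by `κ_∅ = 0`. -/
noncomputable def KeyPolyO : Option (List ℕ) → (ℕ →₀ ℕ) → ℤ
  | none => 0
  | some a => KeyPoly a

/-! ## Edelman–Greene insertion and weak insertion. -/

/-- Edelman–Greene insertion of `x` into a single row: either append `x`, or bump
the smallest entry exceeding `x` (suppressing the replacement when that entry is
`x+1` and `x` already occurs in the row). -/
def eginsRow (x : ℕ) (row : List ℕ) : List ℕ × Option ℕ :=
  match row.findIdx? (fun z => decide (x < z)) with
  | none => (row ++ [x], none)
  | some j =>
    let y := row.getD j 0
    (if y = x + 1 ∧ row.contains x then row else row.set j x, some y)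

/-- Edelman–Greene insertion of `x` into a tableau (rows bottom to top). -/
def egins : ℕ → List (List ℕ) → List (List ℕ)
  | x, [] => [[x]]
  | x, row :: rest =>
    match eginsRow x row with
    | (r, none) => r :: rest
    | (r, some y) => r :: egins y rest

/-- The Edelman–Greene insertion tableau `P(ρ)` of a word. -/
def PEG (ρ : List ℕ) : List (List ℕ) := ρ.foldl (fun P x => egins x P) []

/-- One sweep of all the maps `drop_i` on a tableau (rows bottom to top). -/
def sweepDropT (T : List (List ℕ)) : List (List ℕ) :=
  (List.range T.length).foldl (fun t i => dropAt (i + 1) t) T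

/-- The drop of a tableau: repeatedly drop until reaching the increasing Young
tableau of the class. -/
def dropCanon (T : List (List ℕ)) : List (List ℕ) :=
  sweepDropT^[T.flatten.length * T.length + 1] T

/-- Weak insertion of the letter `x` into a Yamanouchi key tableau `P`:
`lift (drop P ← x)`. -/
def winsert (x : ℕ) (P : List (List ℕ)) : List (List ℕ) :=
  liftCanon (egins x (dropCanon P))

/-- The weak insertion tableau `P̃(ρ)` (rows bottom to top). -/
def Pweak (ρ : List ℕ) : List (List ℕ) := ρ.foldl (fun P x => winsert x P) []

/-- The Yamanouchi word of the Coxeter–Knuth class of `ρ`: the row reading word of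
`P̃(ρ)`. -/
def yamWord (ρ : List ℕ) : List ℕ := wordOf (Pweak ρ)

/-- The shape (weak composition) of the weak insertion tableau of the first `m`
letters of `ρ`. -/
def shapeAt (ρ : List ℕ) (m : ℕ) : List ℕ :=
  (desWord (wordOf (Pweak (ρ.take m)))).getD []

/-- Append the entry `e` at the end of row `j` (0-indexed from the bottom),
extending with empty rows as needed. -/
def placeEntry (Q : List (List ℕ)) (j e : ℕ) : List (List ℕ) :=
  let Q' := Q ++ List.replicate (j + 1 - Q.length) []
  Q'.set j (Q'.getD j [] ++ [e])

/-- The (0-indexed) row in which the shape grows from `aold` to `anew`. -/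
def growRow (aold anew : List ℕ) : ℕ :=
  ((List.range anew.length).find?
    (fun j => decide (aold.getD j 0 ≠ anew.getD j 0))).getD 0

/-- The weak recording tableau `Q̃(ρ)`: entry `i` is placed in the cell where the
shape grows at the step inserting `ρ_i` (entries are placed in decreasing order). -/
def Qweak (ρ : List ℕ) : List (List ℕ) :=
  (List.range ρ.length).foldl (fun Q m =>
    placeEntry Q (growRow (shapeAt ρ m) (shapeAt ρ (m + 1))) (ρ.length - m)) []

/-! ## Elementary weak dual equivalence involutions. -/

/-- Column reading order on entries: by column, and bottom to top within a column. -/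
def colKeyLe (T : List (List ℕ)) (x y : ℕ) : Bool :=
  decide (colOf T x < colOf T y ∨ (colOf T x = colOf T y ∧ rowOf T x ≤ rowOf T y))

/-- Sort three values by a boolean order. -/
def sort3 (le : ℕ → ℕ → Bool) (a b c : ℕ) : ℕ × ℕ × ℕ :=
  if le a b then
    if le b c then (a, b, c) else if le a c then (a, c, b) else (c, a, b)
  else
    if le a c then (b, a, c) else if le b c then (b, c, a) else (c, b, a)

/-- Relabel the entries `x, y, z` of `T` as `x', y', z'` respectively. -/
def relabel3 (T : List (List ℕ)) (x y z x' y' z' : ℕ) : List (List ℕ) :=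
  T.map (List.map (fun t =>
    if t = x then x' else if t = y then y' else if t = z then z' else t))

/-- The elementary weak dual equivalence involution `d̃_i` on standard key tableaux:
with `u, v, w` the cells of `i−1, i, i+1` in column reading order, if `u` and `w`
share a row and `v` does not, cycle the three entries so that `i` shares a row with
`i ± 1`; else if `v` holds `i+1` swap `i−1, i`; else if `v` holds `i−1` swap
`i, i+1`; otherwise fix `T`. -/
def wde (i : ℕ) (T : List (List ℕ)) : List (List ℕ) :=
  let s := sort3 (colKeyLe T) (i - 1) i (i + 1)
  let u := s.1
  let v := s.2.1
  let w := s.2.2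
  if rowOf T u = rowOf T w ∧ rowOf T v ≠ rowOf T u then
    let T1 := relabel3 T u v w w u v
    let T2 := relabel3 T u v w v w u
    if rowOf T1 i = rowOf T1 (i - 1) ∨ rowOf T1 i = rowOf T1 (i + 1) then T1 else T2
  else if v = i + 1 then relabel3 T (i - 1) i (i + 1) i (i - 1) (i + 1)
  else if v = i - 1 then relabel3 T (i - 1) i (i + 1) (i - 1) (i + 1) i
  else T

/-- Remove trailing zero parts of a weak composition (two weak compositions are
identified when they differ only in trailing zeros). -/
def trimZeros (a : List ℕ) : List ℕ :=
  (a.reverse.dropWhile (fun x => x == 0)).reverse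

/-- The transposition `s_i` acting on compositions by interchanging the parts in
positions `i` and `i+1` (1-indexed). -/
def swapParts (i : ℕ) (c : List ℕ) : List ℕ :=
  if 1 ≤ i ∧ i < c.length then
    (c.set (i - 1) (c.getD i 0)).set i (c.getD (i - 1) 0)
  else c

end EG

namespace EG

/-!
Write `n ⋯ 2 1` as the concatenation of its runs. The labels `t̂` strictly decrease along it, so the
runs with label at most `k` cover exactly `1, …, m`, where `m = d_1 + ⋯ + d_k` for `d = des(T)`.
An entry of one of the first `k` rows lies in a run with `t̂ ≤ t ≤ k`, hence is at most `m`;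
counting the entries of these rows gives `a_1 + ⋯ + a_k ≤ m`.

If `des(T) = a`, then equality holds for every `k`, so the first `k` rows hold exactly the entries
`1, …, a_1 + ⋯ + a_k`. As rows decrease, `T` is the tableau whose rows, read from top to bottom,
spell `n ⋯ 2 1`. Conversely, the runs of that tableau are its nonempty rows, a new run starting
whenever the column index falls back to the first column, and therefore its weak descent
composition is `a`.
-/

theorem sum_map_ite_eq_zero {α M : Type*} [AddMonoid M] {l : List α} {P : α → Prop}
    [DecidablePred P] (hP : ∀ x ∈ l, ¬P x) (f : α → M) :
    (l.map fun x => if P x then f x else 0).sum = 0 := by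
  refine sum_eq_zero fun m hm => ?_
  obtain ⟨x, hx, rfl⟩ := mem_map.mp hm
  exact if_neg (hP x hx)

theorem sum_map_filter_eq {α M : Type*} [AddMonoid M] {p : α → Bool} {f : α → M}
    (hf : ∀ x, p x = false → f x = 0) (l : List α) :
    ((l.filter p).map f).sum = (l.map f).sum := by
  induction l with
  | nil => rfl
  | cons x l ih => cases hx : p x <;> simp [hx, ih, hf]

theorem sum_take_succ_eq_add_getD {M : Type*} [AddMonoid M] (l : List M) (k : ℕ) :
    (l.take (k + 1)).sum = (l.take k).sum + l.getD k 0 := by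
  rw [take_add_one, sum_append, getD_eq_getElem?_getD]
  cases l[k]? <;> simp

theorem eq_of_sum_take_eq {M : Type*} [AddLeftCancelMonoid M] {l m : List M}
    (hlen : l.length = m.length) (hsum : ∀ k, (l.take k).sum = (m.take k).sum) : l = m := by
  refine ext_getElem hlen fun k hl hm => ?_
  have hsucc := hsum (k + 1)
  rwa [sum_take_succ_eq_add_getD, sum_take_succ_eq_add_getD, hsum k, add_right_inj,
    getD_eq_getElem _ _ hl, getD_eq_getElem _ _ hm] at hsucc

theorem le_headD_of_pairwise_gt {α : Type*} [Preorder α] {l : List α}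
    (hl : l.Pairwise (· > ·)) {x : α} (hx : x ∈ l) (d : α) : x ≤ l.headD d := by
  cases l with
  | nil => simp at hx
  | cons y l =>
    rcases mem_cons.mp hx with rfl | hx
    · exact le_rfl
    · exact (rel_of_pairwise_cons hl hx).le

theorem length_le_of_nodup_of_mem_Icc {l : List ℕ} (hl : l.Nodup) {m : ℕ}
    (hmem : ∀ e ∈ l, 1 ≤ e ∧ e ≤ m) : l.length ≤ m := by
  have hsub : l ⊆ range' 1 m := fun e he => by
    have := hmem e he
    rw [mem_range'_1]
    lia
  simpa using (hl.subperm hsub).length_le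

/-! ## Labels of the runs -/

theorem splitWhen_eq_splitBy (brk : ℕ → ℕ → Bool) (l : List ℕ) :
    splitWhen brk l = l.splitBy fun x y => !brk x y := by
  induction l with
  | nil => rfl
  | cons x l ih =>
    cases l with
    | nil => rfl
    | cons y l =>
      obtain ⟨hflat, hne, hchain, hbreak⟩ := splitBy_eq_iff.mp ih.symm
      rcases hsplit : splitWhen brk (y :: l) with _ | ⟨_ | ⟨z, r⟩, rs⟩
      · simp [hsplit] at hflat
      · simp [hsplit] at hne
      · rw [hsplit] at hflat hne hchain hbreak
        obtain ⟨rfl, rfl⟩ : y = z ∧ l = r ++ rs.flatten := by simpa using hflat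
        symm
        rw [splitBy_eq_iff]
        by_cases hxy : brk x y <;> cases rs <;> simp_all [splitWhen]

theorem hatMins_cons (r : ℤ) (L : List ℤ) :
    hatMins (r :: L) = L.scanl (fun p x => min x (p - 1)) r := by
  have hfold (A : List ℤ) : (L.foldl (fun (acc : List ℤ × Option ℤ) r =>
      let v := match acc.2 with
        | none => r
        | some p => min r (p - 1)
      (acc.1 ++ [v], some v)) (A ++ [r], some r)).1 =
        A ++ L.scanl (fun p x => min x (p - 1)) r := by
    induction L generalizing A r with
    | nil => simp
    | cons x L ih => simpa using ih (min x (r - 1)) (A ++ [r])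
  exact hfold []

theorem hatMins_cons_cons (r s : ℤ) (L : List ℤ) :
    hatMins (r :: s :: L) = r :: hatMins (min s (r - 1) :: L) := by
  simp [hatMins_cons]

theorem headD_hatMins (L : List ℤ) : (hatMins L).headD 0 = L.headD 0 := by
  rcases L with _ | ⟨r, _ | ⟨s, L⟩⟩
  · rfl
  · rfl
  · rw [hatMins_cons_cons, headD_cons, headD_cons]

theorem pairwise_hatMins (L : List ℤ) : (hatMins L).Pairwise (· > ·) := by
  cases L with
  | nil => exact .nil
  | cons r L =>
    rw [← isChain_iff_pairwise]
    induction L generalizing r with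
    | nil => simp [hatMins_cons]
    | cons s L ih =>
      rw [hatMins_cons_cons, isChain_cons]
      refine ⟨?_, ih _⟩
      simp [hatMins_cons]

theorem forall₂_hatMins_le (L : List ℤ) : Forall₂ (· ≤ ·) (hatMins L) L := by
  cases L with
  | nil => exact .nil
  | cons r L =>
    have hle (p : ℤ) (hp : p ≤ r) : Forall₂ (· ≤ ·) (hatMins (p :: L)) (r :: L) := by
      induction L generalizing p r with
      | nil => simpa [hatMins_cons] using hp
      | cons s L ih =>
        rw [hatMins_cons_cons]
        exact .cons hp (ih _ _ (min_le_left _ _))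
    exact hle r le_rfl

theorem hatMins_eq_self {L : List ℤ} (hL : L.Pairwise (· > ·)) : hatMins L = L := by
  rw [← isChain_iff_pairwise] at hL
  cases L with
  | nil => rfl
  | cons r L =>
    induction L generalizing r with
    | nil => rfl
    | cons s L ih =>
      obtain ⟨hrs, hL⟩ := isChain_cons_cons.mp hL
      rw [hatMins_cons_cons, min_eq_left (by lia), ih s hL]

/-! ## Prefix sums of weak descent compositions -/

/-- The total size of the blocks with label at most `k`, where the labels `hs` and the sizes `lens`
of the blocks are listed in the same order. It is the prefix sum of the weak composition having
the size of each block in the position given by its label. -/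
def lowSum (hs : List ℤ) (lens : List ℕ) (k : ℕ) : ℕ :=
  ((hs.zip lens).map fun q => if q.1 ≤ (k : ℤ) then q.2 else 0).sum

theorem lowSum_cons (h : ℤ) (hs : List ℤ) (m : ℕ) (lens : List ℕ) (k : ℕ) :
    lowSum (h :: hs) (m :: lens) k = (if h ≤ k then m else 0) + lowSum hs lens k := by
  simp [lowSum]

theorem length_buildWeakComp (hs : List ℤ) (lens : List ℕ) :
    (buildWeakComp hs lens).length = (hs.headD 0).toNat := by
  simp [buildWeakComp]

theorem match_find?_eq_sum {hs : List ℤ} (hhs : hs.Nodup) (lens : List ℕ) (c : ℤ) :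
    (match (hs.zip lens).find? (fun q => decide (q.1 = c)) with
      | some q => q.2
      | none => 0) = ((hs.zip lens).map fun q => if q.1 = c then q.2 else 0).sum := by
  induction hs generalizing lens with
  | nil => rfl
  | cons h hs ih =>
    obtain ⟨hnotMem, hhs⟩ := nodup_cons.mp hhs
    cases lens with
    | nil => rfl
    | cons m lens =>
      by_cases hc : h = c
      · have hother : ∀ q ∈ hs.zip lens, q.1 ≠ c := by
          rintro q hq rfl
          exact hnotMem (hc ▸ (of_mem_zip hq).1)
        simp [hc, sum_map_ite_eq_zero hother]
      · simpa [hc] using ih hhs lens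

theorem getD_buildWeakComp {hs : List ℤ} (hhs : hs.Pairwise (· > ·)) (lens : List ℕ) (p : ℕ) :
    (buildWeakComp hs lens).getD p 0 =
      ((hs.zip lens).map fun q => if q.1 = (p : ℤ) + 1 then q.2 else 0).sum := by
  by_cases hp : p < (hs.headD 0).toNat
  · rw [← match_find?_eq_sum (hhs.imp ne_of_gt)]
    simp only [buildWeakComp, bind_pure_comp, map_eq_map, getD_eq_getElem?_getD, getElem?_map,
      getElem?_range hp, Option.map_some, Option.getD_some]
  · rw [getD_eq_default _ _ (by rwa [length_buildWeakComp, ← not_lt]), sum_map_ite_eq_zero]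
    intro q hq
    have := le_headD_of_pairwise_gt hhs (of_mem_zip hq).1 0
    lia

theorem sum_take_buildWeakComp {hs : List ℤ} (hhs : hs.Pairwise (· > ·)) (hpos : ∀ h ∈ hs, 0 < h)
    (lens : List ℕ) (k : ℕ) : ((buildWeakComp hs lens).take k).sum = lowSum hs lens k := by
  induction k with
  | zero =>
    rw [take_zero, sum_nil, lowSum, sum_map_ite_eq_zero]
    exact fun q hq => not_le.mpr (hpos _ (of_mem_zip hq).1)
  | succ k ih =>
    rw [sum_take_succ_eq_add_getD, ih, getD_buildWeakComp hhs, lowSum, lowSum, ← sum_map_add]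
    congr 2
    funext q
    grind

theorem desFromBlocks_eq_some_iff {mins : List ℤ} {lens d : List ℕ} :
    desFromBlocks mins lens = some d ↔
      (∀ h ∈ hatMins mins, 0 < h) ∧ buildWeakComp (hatMins mins) lens = d := by
  have hhs := pairwise_hatMins mins
  rcases eq_nil_or_concat (hatMins mins) with hnil | ⟨hs, h, hcons⟩
  · simp [desFromBlocks, hnil, buildWeakComp]
  · have hlast : (∀ x ∈ hatMins mins, 0 < x) ↔ 0 < h := by
      rw [hcons, concat_eq_append] at hhs ⊢
      have hlt : ∀ x ∈ hs, h < x := fun x hx => (pairwise_append.mp hhs).2.2 x hx h (by simp)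
      refine ⟨fun hpos => hpos h (by simp), fun hh x hx => ?_⟩
      rcases mem_append.mp hx with hx | hx
      · exact hh.trans (hlt x hx)
      · exact mem_singleton.mp hx ▸ hh
    rw [hlast]
    simp [desFromBlocks, hcons]

theorem lowSum_eq_sum {hs : List ℤ} {lens : List ℕ} {k : ℕ} (hk : ∀ h ∈ hs, h ≤ k)
    (hlen : hs.length = lens.length) : lowSum hs lens k = lens.sum := by
  have hmap : ((hs.zip lens).map fun q => if q.1 ≤ (k : ℤ) then q.2 else 0) = lens := by
    conv_rhs => rw [← map_snd_zip hlen.ge]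
    exact map_congr_left fun q hq => if_pos (hk _ (of_mem_zip hq).1)
  rw [lowSum, hmap]

theorem le_lowSum {t : List ℕ → ℤ} {hs : List ℤ} {R : List (List ℕ)} {n k e : ℕ}
    (hle : Forall₂ (fun h r => h ≤ t r) hs R) (hhs : hs.Pairwise (· > ·))
    (hR : R.flatten = (range' 1 n).reverse) {r : List ℕ} (hr : r ∈ R) (hrk : t r ≤ k)
    (he : e ∈ r) : e ≤ lowSum hs (R.map length) k := by
  induction hle generalizing n with
  | nil => simp at hr
  | @cons h s hs R hhs_le hle ih =>
    by_cases hk : h ≤ k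
    · have hall : ∀ x ∈ h :: hs, x ≤ k := fun x hx => (le_headD_of_pairwise_gt hhs hx 0).trans hk
      have hen : e ∈ (range' 1 n).reverse := hR ▸ mem_flatten_of_mem hr he
      rw [lowSum_eq_sum hall (by simpa using hle.length_eq), ← length_flatten, hR]
      rw [mem_reverse, mem_range'_1] at hen
      rw [length_reverse, length_range']
      lia
    · have htail : R.flatten = (range' 1 (n - s.length)).reverse := by
        have := congrArg (drop s.length) hR
        rwa [flatten_cons, drop_left, drop_reverse, length_range',
          take_range'_of_length_ge (Nat.sub_le _ _)] at this
      rw [map_cons, lowSum_cons, if_neg hk, zero_add]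
      rcases mem_cons.mp hr with rfl | hr
      · exact absurd (hhs_le.trans hrk) hk
      · exact ih (pairwise_cons.mp hhs).2 htail hr

/-! ## Rows and columns of entries -/

theorem rowOf_lt_of_mem_flatten_take {T : List (List ℕ)} {k e : ℕ} (he : e ∈ (T.take k).flatten) :
    rowOf T e < k := by
  obtain ⟨r, hr, her⟩ := mem_flatten.mp he
  obtain ⟨i, hi, rfl⟩ := mem_take_iff_getElem.mp hr
  have hle : rowOf T e ≤ i := by
    by_contra! hlt
    simpa [her] using not_of_lt_findIdx hlt
  lia

theorem rowOf_lt_length {T : List (List ℕ)} {e : ℕ} (he : e ∈ T.flatten) :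
    rowOf T e < T.length :=
  rowOf_lt_of_mem_flatten_take (by rwa [take_length])

theorem rowOf_eq {T : List (List ℕ)} (hT : T.flatten.Nodup) {i e : ℕ} (hi : i < T.length)
    (he : e ∈ T[i]) : rowOf T e = i := by
  refine (findIdx_eq hi).mpr ⟨by simpa using he, fun j hj => ?_⟩
  have hdisj := pairwise_iff_getElem.mp (nodup_flatten.mp hT).2 j i (by lia) hi hj
  simpa using fun hej => hdisj hej he

theorem colOf_getElem {T : List (List ℕ)} (hT : T.flatten.Nodup) {i j : ℕ} (hi : i < T.length)
    (hj : j < T[i].length) : colOf T T[i][j] = j := by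
  rw [colOf, rowOf_eq hT hi (getElem_mem hj), getD_eq_getElem _ _ hi, findIdx_eq hj]
  have hnodup : T[i].Nodup := (nodup_flatten.mp hT).1 _ (getElem_mem hi)
  refine ⟨by simp, fun l hl => ?_⟩
  simpa [hnodup.getElem_inj_iff] using hl.ne

theorem minRow_le {T : List (List ℕ)} {r : List ℕ} {e : ℕ} (he : e ∈ r) :
    minRow T r ≤ rowOf T e + 1 := by
  have hmem : rowOf T e + 1 ∈ r.map fun e => rowOf T e + 1 := mem_map_of_mem he
  obtain ⟨m, hm⟩ := Option.isSome_iff_exists.mp (isSome_min?_of_mem hmem)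
  rw [minRow, hm]
  exact (min?_eq_some_iff.mp hm).2 _ hmem

theorem exists_minRow_eq (T : List (List ℕ)) {r : List ℕ} (hr : r ≠ []) :
    ∃ e ∈ r, minRow T r = rowOf T e + 1 := by
  have hne : (r.map fun e => rowOf T e + 1) ≠ [] := by simpa using hr
  obtain ⟨m, hm⟩ := Option.isSome_iff_exists.mp (isSome_min?_of_ne_nil hne)
  obtain ⟨e, he, rfl⟩ := mem_map.mp (min?_eq_some_iff.mp hm).1
  exact ⟨e, he, by rw [minRow, hm, Option.getD_some]⟩

theorem minRow_getElem {T : List (List ℕ)} (hT : T.flatten.Nodup) {i : ℕ} (hi : i < T.length)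
    (hne : T[i] ≠ []) : minRow T T[i] = i + 1 := by
  obtain ⟨e, he, hmin⟩ := exists_minRow_eq T hne
  rw [hmin, rowOf_eq hT hi he]

/-! ## The weak descent composition of a filling -/

theorem flatten_sktRuns (T : List (List ℕ)) :
    (sktRuns T).flatten = (range' 1 T.flatten.length).reverse := by
  rw [sktRuns, splitWhen_eq_splitBy, flatten_splitBy]

theorem nil_notMem_sktRuns (T : List (List ℕ)) : [] ∉ sktRuns T := by
  rw [sktRuns, splitWhen_eq_splitBy]
  exact nil_notMem_splitBy _ _

/-- The minima `t_i` of the runs of `n ⋯ 2 1`: the lowest row of `T` meeting each run. -/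
def runMins (T : List (List ℕ)) : List ℤ :=
  (sktRuns T).map fun r => (minRow T r : ℤ)

theorem pos_of_mem_runMins {T : List (List ℕ)} {t : ℤ} (ht : t ∈ runMins T) : 0 < t := by
  obtain ⟨r, hr, rfl⟩ := mem_map.mp ht
  obtain ⟨e, -, hmin⟩ := exists_minRow_eq T (ne_of_mem_of_not_mem hr (nil_notMem_sktRuns T))
  lia

theorem sum_take_desSKT {T : List (List ℕ)} {d : List ℕ} (hd : desSKT T = some d) (k : ℕ) :
    (d.take k).sum = lowSum (hatMins (runMins T)) ((sktRuns T).map length) k := by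
  obtain ⟨c, hc, rfl⟩ := Option.map_eq_some_iff.mp hd
  obtain ⟨hpos, rfl⟩ := desFromBlocks_eq_some_iff.mp hc
  rw [take_append, sum_append, take_replicate, sum_replicate, smul_zero, add_zero]
  exact sum_take_buildWeakComp (pairwise_hatMins _) hpos _ k

/-- Fillings of a diagram, given row by row, with the entries `1, …, n`, each used once; nothing
is asked of the order of the entries in rows or columns. -/
def IsStandardFilling (T : List (List ℕ)) : Prop :=
  T.flatten ~ range' 1 T.flatten.length

theorem IsSKT.isStandardFilling {a : List ℕ} {T : List (List ℕ)} (hT : IsSKT a T) :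
    IsStandardFilling T := by
  obtain ⟨rfl, -, hperm, -⟩ := hT
  rwa [IsStandardFilling, length_flatten]

theorem IsStandardFilling.nodup {T : List (List ℕ)} (hT : IsStandardFilling T) :
    T.flatten.Nodup :=
  hT.nodup_iff.mpr nodup_range'

theorem IsStandardFilling.one_le {T : List (List ℕ)} (hT : IsStandardFilling T) {e : ℕ}
    (he : e ∈ T.flatten) : 1 ≤ e :=
  (mem_range'_1.mp (hT.mem_iff.mp he)).1

theorem IsStandardFilling.le_sum_take_desSKT {T : List (List ℕ)} (hT : IsStandardFilling T)
    {d : List ℕ} (hd : desSKT T = some d) {k e : ℕ} (he : e ∈ (T.take k).flatten) :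
    e ≤ (d.take k).sum := by
  have hruns : e ∈ (sktRuns T).flatten := by
    rw [flatten_sktRuns, mem_reverse, ← hT.mem_iff]
    exact (take_sublist k T).flatten.subset he
  obtain ⟨r, hr, her⟩ := mem_flatten.mp hruns
  have hrk : minRow T r ≤ k := (minRow_le her).trans (rowOf_lt_of_mem_flatten_take he)
  rw [sum_take_desSKT hd]
  exact le_lowSum (t := fun r => (minRow T r : ℤ)) (forall₂_map_right_iff.mp (forall₂_hatMins_le _))
    (pairwise_hatMins _) (flatten_sktRuns T) hr (by exact_mod_cast hrk) her

theorem IsStandardFilling.domLe_desSKT {T : List (List ℕ)} (hT : IsStandardFilling T)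
    {d : List ℕ} (hd : desSKT T = some d) : domLe (T.map length) d := by
  intro k
  have hsub : (T.take k).flatten <+ T.flatten := (take_sublist k T).flatten
  rw [← map_take, ← length_flatten]
  exact length_le_of_nodup_of_mem_Icc (hT.nodup.sublist hsub) fun e he =>
    ⟨hT.one_le (hsub.subset he), hT.le_sum_take_desSKT hd he⟩

theorem IsStandardFilling.length_desSKT {T : List (List ℕ)} (hT : IsStandardFilling T)
    {d : List ℕ} (hd : desSKT T = some d) : d.length = T.length := by
  obtain ⟨c, hc, rfl⟩ := Option.map_eq_some_iff.mp hd
  obtain ⟨-, rfl⟩ := desFromBlocks_eq_some_iff.mp hc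
  suffices (buildWeakComp (hatMins (runMins T)) ((sktRuns T).map length)).length ≤ T.length by
    rw [length_append, length_replicate]
    exact Nat.add_sub_cancel' this
  rw [length_buildWeakComp, headD_hatMins, runMins]
  rcases hruns : sktRuns T with _ | ⟨r, rs⟩
  · simp
  · have hr : r ∈ sktRuns T := by simp [hruns]
    obtain ⟨e, her, hmin⟩ := exists_minRow_eq T (ne_of_mem_of_not_mem hr (nil_notMem_sktRuns T))
    have he : e ∈ T.flatten := by
      rw [hT.mem_iff, ← mem_reverse, ← flatten_sktRuns]
      exact mem_flatten_of_mem hr her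
    rw [map_cons, headD_cons, Int.toNat_natCast, hmin]
    exact rowOf_lt_length he

/-! ## The tableau with row reading word `n ⋯ 2 1` -/

theorem wordOf_perm_flatten (T : List (List ℕ)) : wordOf T ~ T.flatten :=
  (reverse_perm T).flatten

theorem pairwise_gt_wordOf_iff {T : List (List ℕ)} :
    (wordOf T).Pairwise (· > ·) ↔ (∀ r ∈ T, r.Pairwise (· > ·)) ∧
      T.Pairwise fun lo hi => ∀ x ∈ lo, ∀ y ∈ hi, x < y := by
  rw [wordOf, pairwise_flatten, pairwise_reverse]
  refine and_congr (by simp) (iff_of_eq ?_)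
  congr
  grind

/-- The fillings whose rows, read from left to right and from top to bottom, spell `n ⋯ 2 1`.
There is one for each shape `a`, and it is the tableau `T_a`. -/
def IsSuperstandard (T : List (List ℕ)) : Prop :=
  wordOf T = (range' 1 T.flatten.length).reverse

theorem isSuperstandard_iff {T : List (List ℕ)} :
    IsSuperstandard T ↔ IsStandardFilling T ∧ (wordOf T).Pairwise (· > ·) := by
  have hdec : (range' 1 T.flatten.length).reverse.Pairwise (· > ·) :=
    pairwise_reverse.mpr pairwise_lt_range'
  refine ⟨fun hw => ⟨?_, hw ▸ hdec⟩, fun ⟨hT, hw⟩ => ?_⟩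
  · exact ((wordOf_perm_flatten T).symm.trans (.of_eq hw)).trans (reverse_perm _)
  · exact ((wordOf_perm_flatten T).trans hT |>.trans (reverse_perm _).symm).eq_of_pairwise
      (fun _ _ _ _ h h' => absurd h h'.asymm) hw hdec

theorem IsSuperstandard.eq_of_map_length_eq {S T : List (List ℕ)} (hS : IsSuperstandard S)
    (hT : IsSuperstandard T) (hshape : S.map length = T.map length) : S = T := by
  refine reverse_injective (eq_iff_flatten_eq.mpr ⟨?_, by rw [map_reverse, map_reverse, hshape]⟩)
  calc wordOf S = (range' 1 S.flatten.length).reverse := hS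
    _ = (range' 1 T.flatten.length).reverse := by rw [length_flatten, length_flatten, hshape]
    _ = wordOf T := hT.symm

theorem IsSuperstandard.isStandardFilling {T : List (List ℕ)} (hT : IsSuperstandard T) :
    IsStandardFilling T :=
  (isSuperstandard_iff.mp hT).1

theorem IsStandardFilling.lt_of_mem_take_of_mem_drop {T : List (List ℕ)}
    (hT : IsStandardFilling T) {k : ℕ}
    (hk : ∀ e ∈ (T.take k).flatten, e ≤ (T.take k).flatten.length) {x y : ℕ}
    (hx : x ∈ (T.take k).flatten) (hy : y ∈ (T.drop k).flatten) : x < y := by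
  have hflat : T.flatten = (T.take k).flatten ++ (T.drop k).flatten := by
    rw [← flatten_append, take_append_drop]
  obtain ⟨hnodup, -, hdisj⟩ := nodup_append'.mp (hflat ▸ hT.nodup)
  by_contra! hyx
  have hle := length_le_of_nodup_of_mem_Icc (l := y :: (T.take k).flatten)
    (nodup_cons.mpr ⟨fun hy' => hdisj hy' hy, hnodup⟩) (m := (T.take k).flatten.length) ?_
  · simp at hle
  · have hpos : ∀ e ∈ T.flatten, 1 ≤ e := fun e => hT.one_le
    rw [hflat] at hpos
    grind

theorem IsStandardFilling.isSuperstandard_of_desSKT_eq {T : List (List ℕ)}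
    (hT : IsStandardFilling T) (hrows : ∀ r ∈ T, r.Pairwise (· > ·))
    (hd : desSKT T = some (T.map length)) :
    IsSuperstandard T := by
  refine isSuperstandard_iff.mpr ⟨hT, pairwise_gt_wordOf_iff.mpr ⟨hrows, ?_⟩⟩
  rw [pairwise_iff_getElem]
  intro i j hi hj hij x hx y hy
  refine hT.lt_of_mem_take_of_mem_drop (k := j) (fun e he => ?_)
    (mem_flatten_of_mem (mem_take_iff_getElem.mpr ⟨i, by lia, rfl⟩) hx)
    (mem_flatten_of_mem (mem_drop_iff_getElem.mpr ⟨0, by lia, rfl⟩) hy)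
  rw [length_flatten, map_take]
  exact hT.le_sum_take_desSKT hd he

theorem IsSuperstandard.isChain_eq_add_one {T : List (List ℕ)} (hT : IsSuperstandard T)
    {r : List ℕ} (hr : r ∈ T) : r.IsChain fun x y => x = y + 1 := by
  have hword : (wordOf T).IsChain fun x y => x = y + 1 := by
    rw [show wordOf T = _ from hT, isChain_reverse]
    exact isChain_range' 1 _ 1
  exact hword.infix (infix_of_mem_flatten (mem_reverse.mpr hr))

theorem IsSuperstandard.isSKT {T : List (List ℕ)} (hT : IsSuperstandard T) :
    IsSKT (T.map length) T := by
  obtain ⟨hfill, hdec⟩ := isSuperstandard_iff.mp hT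
  obtain ⟨hrows, hlt⟩ := pairwise_gt_wordOf_iff.mp hdec
  refine ⟨rfl, fun r hr => (hrows r hr).isChain, by rwa [← length_flatten], ?_⟩
  intro lo hi hlohi hhi c hchi hclo hc
  rw [getD_eq_getElem T _ hhi] at hchi hc
  rw [getD_eq_getElem T _ (hlohi.trans hhi)] at hclo hc
  rw [getD_eq_getElem _ _ hchi, getD_eq_getElem _ _ hclo] at hc
  have := pairwise_iff_getElem.mp hlt lo hi (by lia) hhi hlohi _ (getElem_mem hclo) _
    (getElem_mem hchi)
  lia

theorem IsSuperstandard.sktRuns_eq {T : List (List ℕ)} (hT : IsSuperstandard T) :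
    sktRuns T = T.reverse.filter (· ≠ []) := by
  have hnodup := hT.isStandardFilling.nodup
  have hmem {r : List ℕ} (hr : r ∈ T.reverse.filter (· ≠ [])) : r ∈ T ∧ r ≠ [] := by
    simpa using hr
  rw [sktRuns, splitWhen_eq_splitBy, splitBy_eq_iff]
  refine ⟨?_, fun h => (hmem h).2 rfl, fun r hr => ?_, ?_⟩
  · rw [flatten_filter_ne_nil]
    exact hT.symm
  · obtain ⟨i, hi, rfl⟩ := getElem_of_mem (hmem hr).1
    have hchain := hT.isChain_eq_add_one (hmem hr).1
    rw [isChain_iff_getElem] at hchain ⊢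
    intro j hj
    rw [← hchain j hj, colOf_getElem hnodup, colOf_getElem hnodup]
    simp
  · refine (pairwise_of_forall_mem_list fun r hr s hs => ?_).isChain
    obtain ⟨i, hi, rfl⟩ := getElem_of_mem (hmem hs).1
    refine ⟨(hmem hr).2, (hmem hs).2, ?_⟩
    rw [head_eq_getElem, colOf_getElem hnodup]
    simp

theorem IsSuperstandard.pairwise_runMins {T : List (List ℕ)} (hT : IsSuperstandard T) :
    (runMins T).Pairwise (· > ·) := by
  have hnodup := hT.isStandardFilling.nodup
  rw [runMins, hT.sktRuns_eq, pairwise_map, pairwise_filter, pairwise_reverse, pairwise_iff_getElem]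
  intro i j hi hj hij hne_j hne_i
  rw [minRow_getElem hnodup hi (by simpa using hne_i),
    minRow_getElem hnodup hj (by simpa using hne_j)]
  lia

theorem sum_map_ite_minRow_le {T : List (List ℕ)} (hT : T.flatten.Nodup) (k : ℕ) :
    (T.map fun r => if minRow T r ≤ k then r.length else 0).sum = ((T.map length).take k).sum := by
  have hlow : ∀ r ∈ T.take k, (if minRow T r ≤ k then r.length else 0) = r.length := by
    intro r hr
    obtain ⟨i, hi, rfl⟩ := mem_take_iff_getElem.mp hr
    rcases eq_or_ne T[i] [] with hnil | hne
    · simp [hnil]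
    · rw [minRow_getElem hT _ hne, if_pos (by lia)]
  have hhigh : ∀ r ∈ T.drop k, (if minRow T r ≤ k then r.length else 0) = 0 := by
    intro r hr
    obtain ⟨i, hi, rfl⟩ := mem_drop_iff_getElem.mp hr
    rcases eq_or_ne T[k + i] [] with hnil | hne
    · simp [hnil]
    · rw [minRow_getElem hT _ hne, if_neg (by lia)]
  conv_lhs => arg 1; arg 2; rw [← take_append_drop k T]
  rw [map_append, sum_append, map_congr_left hlow, map_congr_left hhigh]
  simp

theorem IsSuperstandard.lowSum_runMins {T : List (List ℕ)} (hT : IsSuperstandard T) (k : ℕ) :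
    lowSum (runMins T) ((sktRuns T).map length) k = ((T.map length).take k).sum := by
  rw [← sum_map_ite_minRow_le hT.isStandardFilling.nodup]
  set f : List ℕ → ℕ := fun r => if minRow T r ≤ k then r.length else 0 with hf
  calc lowSum (runMins T) ((sktRuns T).map length) k
      = ((sktRuns T).map f).sum := by
        simp only [lowSum, runMins, zip_map', map_map, hf, Function.comp_def, Nat.cast_le]
    _ = (T.reverse.map f).sum := by
        rw [hT.sktRuns_eq]
        exact sum_map_filter_eq (by simp [hf]) _
    _ = (T.map f).sum := by rw [map_reverse, sum_reverse]

theorem IsSuperstandard.desSKT_eq {T : List (List ℕ)} (hT : IsSuperstandard T) :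
    desSKT T = some (T.map length) := by
  have hhat : hatMins (runMins T) = runMins T := hatMins_eq_self hT.pairwise_runMins
  have hpos : ∀ h ∈ hatMins (runMins T), 0 < h := by
    rw [hhat]
    exact fun _ => pos_of_mem_runMins
  obtain ⟨d, hd⟩ : ∃ d, desSKT T = some d :=
    ⟨_, congrArg _ (desFromBlocks_eq_some_iff.mpr ⟨hpos, rfl⟩)⟩
  have hlen : d.length = (T.map length).length := by
    rw [hT.isStandardFilling.length_desSKT hd, length_map]
  rw [hd, eq_of_sum_take_eq hlen fun k => ?_]
  rw [sum_take_desSKT hd, hhat, hT.lowSum_runMins]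

/-- The tableau `T_a`: the rows of lengths `a`, from bottom to top, are filled with `1, 2, …`, each
from right to left. -/
def canonicalSKT (a : List ℕ) : List (List ℕ) :=
  (a.splitLengths (range' 1 a.sum)).map reverse

theorem map_length_canonicalSKT (a : List ℕ) : (canonicalSKT a).map length = a := by
  have hcomp : length ∘ reverse = (length : List ℕ → ℕ) := funext fun _ => length_reverse
  rw [canonicalSKT, map_map, hcomp, map_splitLengths_length _ _ length_range'.ge]

theorem isSuperstandard_canonicalSKT (a : List ℕ) : IsSuperstandard (canonicalSKT a) := by
  rw [IsSuperstandard, length_flatten, map_length_canonicalSKT, wordOf, canonicalSKT,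
    ← reverse_flatten, flatten_splitLengths _ _ length_range'.le]

theorem skt_unique_extreme_general (a : List ℕ) :
    (∃ T, IsSKT a T ∧ desSKT T = some a ∧ ∀ S, S.map length = a → IsStandardFilling S →
        (∀ r ∈ S, r.Pairwise (· > ·)) → desSKT S = some a → S = T) ∧
      ∀ T, T.map length = a → IsStandardFilling T → ∀ d, desSKT T = some d → domLe a d := by
  refine ⟨⟨canonicalSKT a, ?_, ?_, ?_⟩, ?_⟩
  · simpa [map_length_canonicalSKT] using (isSuperstandard_canonicalSKT a).isSKT
  · simpa [map_length_canonicalSKT] using (isSuperstandard_canonicalSKT a).desSKT_eq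
  · rintro S rfl hS hrows hdes
    exact (hS.isSuperstandard_of_desSKT_eq hrows hdes).eq_of_map_length_eq
      (isSuperstandard_canonicalSKT _) (map_length_canonicalSKT _).symm
  · rintro T rfl hT d hd
    exact hT.domLe_desSKT hd

/-- For any weak composition `a`, there exists a unique standard
key tableau `T_a ∈ SKT(a)` with `des(T_a) = a`; moreover every non-virtual
`T ∈ SKT(a)` satisfies `des(T) ≥ a` (prefix-sum dominance). -/
theorem skt_unique_extreme (a : List ℕ) :
    (∃! T : List (List ℕ), IsSKT a T ∧ desSKT T = some a) ∧
    ∀ T, IsSKT a T → ∀ d, desSKT T = some d → domLe a d := by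
  obtain ⟨⟨T, hT, hdes, huniq⟩, hdom⟩ := skt_unique_extreme_general a
  refine ⟨⟨T, ⟨hT, hdes⟩, fun S hS => ?_⟩, fun S hS => hdom S hS.1 hS.isStandardFilling⟩
  exact huniq S hS.1.1 hS.1.isStandardFilling
    (fun r hr => isChain_iff_pairwise.mp (hS.1.2.1 r hr)) hS.2

end EG
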